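/- Let W be a closed subset of 2^ω and let S := {σ : μ(W ∩ ⟦σ⟧) > 0}. Then S is a tree (closed under prefixes), [S] ⊆ W, μ([S]) = μ(W), and μ_σ([S]) > 0 for every σ ∈ S. -/

import Mathlib

open MeasureTheory

/-- The first `n` bits of `x ∈ 2^ω`, as a string. -/
def seg (x : ℕ → Bool) (n : ℕ) : List Bool := List.ofFn (fun i : Fin n => x i)

/-- The cylinder of a string: all `x ∈ 2^ω` with `σ` as a prefix. -/
def cyl (σ : List Bool) : Set (ℕ → Bool) := {x | seg x σ.length = σ}

/-- A tree: a set of strings closed under prefixes. -/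
def IsTree (T : Set (List Bool)) : Prop :=
  ∀ σ ∈ T, ∀ τ : List Bool, τ <+: σ → τ ∈ T

/-- The paths of a tree: those `x ∈ 2^ω` all of whose prefixes are in `T`. -/
def paths (T : Set (List Bool)) : Set (ℕ → Bool) := {x | ∀ n, seg x n ∈ T}

/-- Relative measure: `μ_τ(A) = 2^{|τ|} · μ(A ∩ ⟦τ⟧)`. -/
noncomputable def relMeasure (μ : Measure (ℕ → Bool)) (τ : List Bool)
    (A : Set (ℕ → Bool)) : ℝ :=
  2 ^ τ.length * (μ (A ∩ cyl τ)).toReal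

/-- The strongly positive tree associated with a closed set `W`:
the strings `σ` with `μ(W ∩ ⟦σ⟧) > 0`. -/
def posTree (μ : Measure (ℕ → Bool)) (W : Set (ℕ → Bool)) : Set (List Bool) :=
  {σ | 0 < μ (W ∩ cyl σ)}

/-!
The paths of `posTree μ W` arise from `W` by removing the sets `W ∩ cyl σ` of measure zero. There
are only countably many strings, so a null set is removed, and `[posTree μ W]` agrees with `W` up
to a null set. The paths lie in `W` because a point outside the closed set `W` has a prefix whose
cylinder misses `W`.
-/

section Cylinders

variable {x : ℕ → Bool} {m n : ℕ} {σ τ : List Bool}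

theorem length_seg (x : ℕ → Bool) (n : ℕ) : (seg x n).length = n :=
  List.length_ofFn

theorem seg_eq_seg_iff {y : ℕ → Bool} : seg x n = seg y n ↔ ∀ i < n, x i = y i := by
  simp only [seg, List.ofFn_inj, funext_iff, Fin.forall_iff]

theorem seg_prefix_seg (x : ℕ → Bool) (hmn : m ≤ n) : seg x m <+: seg x n := by
  obtain ⟨k, rfl⟩ := Nat.exists_eq_add_of_le hmn
  simp only [seg, List.ofFn_add]
  exact List.prefix_append _ _

theorem cyl_nil : cyl [] = Set.univ :=
  Set.eq_univ_of_forall fun _ ↦ List.ofFn_zero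

theorem cyl_seg (x : ℕ → Bool) (n : ℕ) : cyl (seg x n) = PiNat.cylinder x n := by
  ext y
  simp only [cyl, Set.mem_ofPred_eq, length_seg, seg_eq_seg_iff, PiNat.mem_cylinder_iff]

theorem mem_cyl_seg (x : ℕ → Bool) (n : ℕ) : x ∈ cyl (seg x n) :=
  cyl_seg x n ▸ PiNat.self_mem_cylinder x n

theorem cyl_subset_cyl_of_prefix (hτσ : τ <+: σ) : cyl σ ⊆ cyl τ := by
  intro x (hx : seg x σ.length = σ)
  have hseg : seg x τ.length <+: σ := hx ▸ seg_prefix_seg x hτσ.length_le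
  have hlen : (seg x τ.length).length = τ.length := length_seg x _
  exact (List.prefix_of_prefix_length_le hseg hτσ hlen.le).eq_of_length hlen

end Cylinders

section PosTree

variable {μ : Measure (ℕ → Bool)} {W A : Set (ℕ → Bool)} {σ : List Bool}

theorem relMeasure_pos_iff :
    0 < relMeasure μ σ A ↔ 0 < μ (A ∩ cyl σ) ∧ μ (A ∩ cyl σ) < ⊤ := by
  rw [relMeasure, mul_pos_iff_of_pos_left (by positivity), ENNReal.toReal_pos_iff]

theorem notMem_posTree_iff : σ ∉ posTree μ W ↔ μ (W ∩ cyl σ) = 0 := by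
  simp only [posTree, Set.mem_ofPred_eq, pos_iff_ne_zero, not_not]

theorem isTree_posTree (μ : Measure (ℕ → Bool)) (W : Set (ℕ → Bool)) : IsTree (posTree μ W) :=
  fun _ hσ _ hτσ ↦ lt_of_lt_of_le hσ <|
    measure_mono (Set.inter_subset_inter_right W (cyl_subset_cyl_of_prefix hτσ))

theorem paths_posTree_subset (hW : IsClosed W) : paths (posTree μ W) ⊆ W := by
  intro x hx
  by_contra hxW
  obtain ⟨n, hn⟩ := PiNat.exists_disjoint_cylinder hW hxW
  refine notMem_posTree_iff.2 ?_ (hx n)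
  rw [cyl_seg, hn.inter_eq, measure_empty]

theorem diff_paths_posTree_subset :
    W \ paths (posTree μ W) ⊆ ⋃ σ ∈ (posTree μ W)ᶜ, W ∩ cyl σ := by
  rintro x ⟨hxW, hx⟩
  obtain ⟨n, hn⟩ := not_forall.1 hx
  exact Set.mem_biUnion hn ⟨hxW, mem_cyl_seg x n⟩

theorem measure_diff_paths_posTree (μ : Measure (ℕ → Bool)) (W : Set (ℕ → Bool)) :
    μ (W \ paths (posTree μ W)) = 0 :=
  measure_mono_null diff_paths_posTree_subset <|
    (measure_biUnion_null_iff (Set.to_countable _)).2 fun _ ↦ notMem_posTree_iff.1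

theorem paths_posTree_ae_eq (hW : IsClosed W) : paths (posTree μ W) =ᵐ[μ] W :=
  (paths_posTree_subset hW).eventuallyLE.antisymm (ae_le_set.2 (measure_diff_paths_posTree μ W))

theorem measure_paths_posTree_inter (hW : IsClosed W) (A : Set (ℕ → Bool)) :
    μ (paths (posTree μ W) ∩ A) = μ (W ∩ A) :=
  measure_congr ((paths_posTree_ae_eq hW).inter (ae_eq_refl _))

theorem relMeasure_paths_posTree_pos (hW : IsClosed W) (hfin : μ W ≠ ⊤) (hσ : σ ∈ posTree μ W) :
    0 < relMeasure μ σ (paths (posTree μ W)) := by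
  rw [relMeasure_pos_iff, measure_paths_posTree_inter hW]
  exact ⟨hσ, measure_inter_lt_top_of_left_ne_top hfin⟩

end PosTree

theorem posTree_spec_general {μ : Measure (ℕ → Bool)} {W : Set (ℕ → Bool)} (hW : IsClosed W)
    (hfin : μ W ≠ ⊤) :
    IsTree (posTree μ W) ∧
    paths (posTree μ W) ⊆ W ∧
    μ (paths (posTree μ W)) = μ W ∧
    ∀ σ ∈ posTree μ W, 0 < relMeasure μ σ (paths (posTree μ W)) :=
  ⟨isTree_posTree μ W, paths_posTree_subset hW, measure_congr (paths_posTree_ae_eq hW),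
    fun _ ↦ relMeasure_paths_posTree_pos hW hfin⟩

/-- **Strongly positive hull of a closed set.**
Let `W ⊆ 2^ω` be closed and `S := {σ : μ(W ∩ ⟦σ⟧) > 0}`.  Then `S` is a
tree, `[S] ⊆ W`, `μ([S]) = μ(W)`, and `μ_σ([S]) > 0` for every `σ ∈ S`.
(`μ` is the fair-coin measure, characterized by its values on cylinders.) -/
theorem posTree_spec (μ : Measure (ℕ → Bool))
    (hμ : ∀ σ : List Bool, μ (cyl σ) = (2 : ENNReal)⁻¹ ^ σ.length)
    (W : Set (ℕ → Bool)) (hW : IsClosed W) :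
    IsTree (posTree μ W) ∧
    paths (posTree μ W) ⊆ W ∧
    μ (paths (posTree μ W)) = μ W ∧
    ∀ σ ∈ posTree μ W, 0 < relMeasure μ σ (paths (posTree μ W)) := by
  have hfin : μ Set.univ < ⊤ := by simp [← cyl_nil, hμ]
  exact posTree_spec_general hW (measure_ne_top_of_subset W.subset_univ hfin.ne)
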